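/- An element (γ, s, t) with γ = (γ₁, γ₂, γ₃) ∈ ℝ³ and s, t ∈ ℝ belongs to S(2,1) if and only if the following inequalities hold: γ₁ ≥ γ₂ ≥ γ₃ ≥ 0, γ₁ ≥ s ≥ 0, γ₁ ≥ t ≥ 0, γ₁ + γ₂ ≥ s + t, and γ₁ − γ₃ ≥ |s − t|. -/

import Mathlib

open Matrix

/-- Eigenvalues of a (Hermitian) complex matrix, listed in decreasing order. -/
noncomputable def eigVec {k : ℕ} (X : Matrix (Fin k) (Fin k) ℂ) (hX : X.IsHermitian) :
    Fin k → ℝ :=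
  fun i => hX.eigenvalues (Tuple.sort hX.eigenvalues i.rev)

/-- The `i`-th (0-based) singular value of a rectangular complex matrix:
the square root of the `i`-th largest eigenvalue of `Y * Yᴴ` (and `0` for `i ≥ a`). -/
noncomputable def sval {a b : ℕ} (Y : Matrix (Fin a) (Fin b) ℂ) (i : ℕ) : ℝ :=
  if h : i < a then
    Real.sqrt (eigVec (Y * Yᴴ) (Matrix.isHermitian_mul_conjTranspose_self Y) ⟨i, h⟩)
  else 0

/-- The Horn cone `Horn(k)`. -/
def Horn (k : ℕ) : Set ((Fin k → ℝ) × (Fin k → ℝ) × (Fin k → ℝ)) :=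
  { v | ∃ (X Y : Matrix (Fin k) (Fin k) ℂ) (hX : X.IsHermitian) (hY : Y.IsHermitian),
      v.1 = eigVec X hX ∧ v.2.1 = eigVec Y hY ∧ v.2.2 = eigVec (X + Y) (hX.add hY) }

/-- The Littlewood–Richardson cone `LR(m,n)`. -/
def LRcone (m n : ℕ) : Set ((Fin (m + n) → ℝ) × (Fin m → ℝ) × (Fin n → ℝ)) :=
  { v | ∃ (M : Matrix (Fin (m + n)) (Fin (m + n)) ℂ) (hM : M.IsHermitian),
      v.1 = eigVec M hM ∧
      v.2.1 = eigVec (M.submatrix (Fin.castAdd n) (Fin.castAdd n))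
        (hM.submatrix (Fin.castAdd n)) ∧
      v.2.2 = eigVec (M.submatrix (Fin.natAdd m) (Fin.natAdd m))
        (hM.submatrix (Fin.natAdd m)) }

/-- Top-left `p × p` block. -/
def blockTL (p q : ℕ) (X : Matrix (Fin (p + q)) (Fin (p + q)) ℂ) : Matrix (Fin p) (Fin p) ℂ :=
  X.submatrix (Fin.castAdd q) (Fin.castAdd q)

/-- Top-right `p × q` block. -/
def blockTR (p q : ℕ) (X : Matrix (Fin (p + q)) (Fin (p + q)) ℂ) : Matrix (Fin p) (Fin q) ℂ :=
  X.submatrix (Fin.castAdd q) (Fin.natAdd p)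

/-- Bottom-left `q × p` block. -/
def blockBL (p q : ℕ) (X : Matrix (Fin (p + q)) (Fin (p + q)) ℂ) : Matrix (Fin q) (Fin p) ℂ :=
  X.submatrix (Fin.natAdd p) (Fin.castAdd q)

/-- Bottom-right `q × q` block. -/
def blockBR (p q : ℕ) (X : Matrix (Fin (p + q)) (Fin (p + q)) ℂ) : Matrix (Fin q) (Fin q) ℂ :=
  X.submatrix (Fin.natAdd p) (Fin.natAdd p)

/-- `λ* = (−λ_k, …, −λ_1)`. -/
def starVec {k : ℕ} (x : Fin k → ℝ) : Fin k → ℝ := fun i => -x i.rev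

/-- `ŝ^{p,q} = (s₁, …, s_q, 0, …, 0, −s_q, …, −s₁) ∈ ℝ^{p+q}` (with `p − q` middle zeros). -/
noncomputable def hatPQ (p q : ℕ) (s : Fin q → ℝ) : Fin (p + q) → ℝ :=
  fun i =>
    if h : (i : ℕ) < q then s ⟨i, h⟩
    else if h' : (i : ℕ) < p then 0
    else -s ⟨p + q - 1 - i, by have := i.isLt; omega⟩

/-- The cone `A(p,q)`: pairs `(e(X), s(X₁₂))` for `X` Hermitian of size `p+q`. -/
def coneA (p q : ℕ) : Set ((Fin (p + q) → ℝ) × (Fin q → ℝ)) :=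
  { v | ∃ (X : Matrix (Fin (p + q)) (Fin (p + q)) ℂ) (hX : X.IsHermitian),
      v.1 = eigVec X hX ∧ ∀ i : Fin q, v.2 i = sval (blockTR p q X) (i : ℕ) }

/-- The cone `S(p,q)`: triples `(s(X), s(X₁₂), s(X₂₁))`. -/
def coneS (p q : ℕ) : Set ((Fin (p + q) → ℝ) × (Fin q → ℝ) × (Fin q → ℝ)) :=
  { v | ∃ X : Matrix (Fin (p + q)) (Fin (p + q)) ℂ,
      (∀ i : Fin (p + q), v.1 i = sval X (i : ℕ)) ∧
      (∀ i : Fin q, v.2.1 i = sval (blockTR p q X) (i : ℕ)) ∧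
      (∀ i : Fin q, v.2.2 i = sval (blockBL p q X) (i : ℕ)) }

/-- The cone `T(p,q)`: triples `(s(X), s(X₁₁), s(X₂₂))`. -/
def coneT (p q : ℕ) : Set ((Fin (p + q) → ℝ) × (Fin p → ℝ) × (Fin q → ℝ)) :=
  { v | ∃ X : Matrix (Fin (p + q)) (Fin (p + q)) ℂ,
      (∀ i : Fin (p + q), v.1 i = sval X (i : ℕ)) ∧
      (∀ i : Fin p, v.2.1 i = sval (blockTL p q X) (i : ℕ)) ∧
      (∀ i : Fin q, v.2.2 i = sval (blockBR p q X) (i : ℕ)) }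

/-- `μ(A) = (a_r − r ≥ … ≥ a₂ − 2 ≥ a₁ − 1)` as a decreasing real vector, for
`A = {a₁ < … < a_r}` a subset of `[n]` (0-based indexing internally). -/
noncomputable def muVec {n r : ℕ} (A : Finset (Fin n)) (h : A.card = r) : Fin r → ℝ :=
  fun k => (((A.orderIsoOfFin h k.rev : Fin n) : ℕ) : ℝ) - ((k.rev : ℕ) : ℝ)

/-- `A^o = {ℓ + 1 − a : a ∈ A}` inside `[ℓ]`. -/
def opp {n : ℕ} (A : Finset (Fin n)) : Finset (Fin n) := A.image Fin.rev

/-- `|s|_{K ∩ [q]}` where `K ⊆ [n]`, `s ∈ ℝ^q` and `[q]` is viewed inside `[n]`. -/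
noncomputable def sumRestr {n q : ℕ} (s : Fin q → ℝ) (K : Finset (Fin n)) : ℝ :=
  ∑ i ∈ K, (if h : (i : ℕ) < q then s ⟨i, h⟩ else 0)

/-- The augmented matrix `Ŷ^{p,q} = [[0, Y], [Yᴴ, 0]]` of size `p + q`. -/
def hatM (p q : ℕ) (Y : Matrix (Fin p) (Fin q) ℂ) : Matrix (Fin (p + q)) (Fin (p + q)) ℂ :=
  Matrix.reindex finSumFinEquiv finSumFinEquiv (Matrix.fromBlocks 0 Y Yᴴ 0)

/-!
Everything rests on `sval Y 0 = ‖Y‖`, the `ℓ²` operator norm.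

*Necessity.* Let `A = U * diagonal σ * V` with `U`, `V` unitary and `σ₀ ≥ σ₁ ≥ ⋯ ≥ σₘ`. Then `A` is
within `(σ₀ - σₘ) / 2` of `(σ₀ + σₘ) / 2` times the unitary matrix `U * V`, and the two off-diagonal
blocks of a unitary matrix with top-left block `T` have the same norm since `‖1 - T * Tᴴ‖` equals
`‖1 - Tᴴ * T‖`; so the two block norms of `A` differ by at most `σ₀ - σₘ`. For their sum, subtract
from `A` its top singular direction with coefficient `σ₀ - σ₁`: what remains has norm at most `σ₁`,
and the two block norms of a matrix `u vᵀ` with `u`, `v` unit vectors add up to at most `1`.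

*Sufficiency.* By symmetry `t ≤ s`. A direct sum of one `gᵢ` and a real `2 × 2` matrix with
off-diagonal entries `s`, `t` and the two remaining singular values `gⱼ`, `gₖ` works as soon as
`s + t ≤ gⱼ + gₖ` and `s - t ≤ |gⱼ - gₖ|`. If neither `{j, k} = {0, 1}` nor `{j, k} = {0, 2}` is
possible, then `g₂ < s` and `t < g₁`, and a rotation of such a direct sum gives the required matrix.
-/

open Polynomial WithLp
open scoped Matrix.Norms.L2Operator

section OperatorNorm

variable {𝕜 m n m' n' ι : Type*} [RCLike 𝕜] [Fintype m] [Fintype n] [Fintype m'] [Fintype n']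

lemma l2_opNorm_mul_conjTranspose_self [DecidableEq m] [DecidableEq n] (A : Matrix m n 𝕜) :
    ‖A * Aᴴ‖ = ‖A‖ ^ 2 := by
  simpa only [conjTranspose_conjTranspose, l2_opNorm_conjTranspose, sq] using
    l2_opNorm_conjTranspose_mul_self Aᴴ

lemma l2_opNorm_eq_norm_row [Fintype ι] [Unique ι] [DecidableEq n] (A : Matrix ι n 𝕜) :
    ‖A‖ = ‖toLp 2 (A default)‖ := by
  have hA : A * Aᴴ = diagonal fun _ => ((‖toLp 2 (A default)‖ ^ 2 : ℝ) : 𝕜) := by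
    ext i j
    simp [Unique.eq_default i, Unique.eq_default j, mul_apply, EuclideanSpace.norm_sq_eq,
      RCLike.mul_conj]
  rw [← sq_eq_sq₀ (norm_nonneg _) (norm_nonneg _), ← l2_opNorm_mul_conjTranspose_self, hA,
    l2_opNorm_diagonal, pi_norm_const, RCLike.norm_ofReal, abs_sq]

lemma l2_opNorm_eq_norm_col [Fintype ι] [Unique ι] [DecidableEq ι] (A : Matrix m ι 𝕜) :
    ‖A‖ = ‖toLp 2 fun i => A i default‖ := by
  classical
  rw [← l2_opNorm_conjTranspose, l2_opNorm_eq_norm_row]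
  simp [EuclideanSpace.norm_eq]

lemma l2_opNorm_vecMulVec_le [DecidableEq n] (u : m → 𝕜) (v : n → 𝕜) :
    ‖vecMulVec u v‖ ≤ ‖toLp 2 u‖ * ‖toLp 2 v‖ := by
  rw [vecMulVec_eq Unit]
  refine (l2_opNorm_mul _ _).trans_eq ?_
  rw [l2_opNorm_eq_norm_col, l2_opNorm_eq_norm_row]
  rfl

lemma l2_opNorm_submatrix_one_le [DecidableEq m] {f : m' → m}
    (hf : f.Injective) : ‖(1 : Matrix m m 𝕜).submatrix f id‖ ≤ 1 := by
  classical
  have h : (1 : Matrix m m 𝕜).submatrix f id * ((1 : Matrix m m 𝕜).submatrix f id)ᴴ =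
      diagonal fun _ => 1 := by
    rw [conjTranspose_submatrix, conjTranspose_one,
      ← submatrix_mul _ _ f id f Function.bijective_id, mul_one, submatrix_one f hf, diagonal_one]
  rw [← sq_le_one_iff₀ (norm_nonneg _), ← l2_opNorm_mul_conjTranspose_self, h, l2_opNorm_diagonal]
  exact (pi_norm_const_le _).trans_eq norm_one

lemma l2_opNorm_submatrix_le [DecidableEq n] [DecidableEq n']
    (A : Matrix m n 𝕜) {f : m' → m} {g : n' → n} (hf : f.Injective) (hg : g.Injective) :
    ‖A.submatrix f g‖ ≤ ‖A‖ := by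
  classical
  have hfactor : A.submatrix f g =
      (1 : Matrix m m 𝕜).submatrix f id * A * (1 : Matrix n n 𝕜).submatrix id g := by
    ext i j
    simp [mul_apply, one_apply]
  have hg' : ‖(1 : Matrix n n 𝕜).submatrix id g‖ ≤ 1 := by
    rw [← l2_opNorm_conjTranspose, conjTranspose_submatrix, conjTranspose_one]
    exact l2_opNorm_submatrix_one_le hg
  calc ‖A.submatrix f g‖
      ≤ ‖(1 : Matrix m m 𝕜).submatrix f id‖ * ‖A‖ * ‖(1 : Matrix n n 𝕜).submatrix id g‖ := by
        rw [hfactor]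
        exact (l2_opNorm_mul _ _).trans (by gcongr; exact l2_opNorm_mul _ _)
    _ ≤ 1 * ‖A‖ * 1 := by gcongr; exact l2_opNorm_submatrix_one_le hf
    _ = ‖A‖ := by ring

lemma l2_opNorm_unitary_mul_mul_unitary [DecidableEq n] {U V : Matrix n n 𝕜}
    (hU : U ∈ unitaryGroup n 𝕜) (hV : V ∈ unitaryGroup n 𝕜) (A : Matrix n n 𝕜) :
    ‖U * A * V‖ = ‖A‖ := by
  rw [CStarRing.norm_mul_mem_unitary _ hV, CStarRing.norm_mem_unitary_mul _ hU]

end OperatorNorm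

section Eigenvalues

variable {k : ℕ} {M : Matrix (Fin k) (Fin k) ℂ}

lemma eigVec_antitone (hM : M.IsHermitian) : Antitone (eigVec M hM) := fun _ _ hij =>
  Tuple.monotone_sort hM.eigenvalues (Fin.rev_le_rev.mpr hij)

lemma exists_unitary_eq_mul_diagonal_eigVec_mul (hM : M.IsHermitian) :
    ∃ U ∈ unitaryGroup (Fin k) ℂ, M = U * diagonal (fun i => (eigVec M hM i : ℂ)) * star U := by
  let e : Fin k ≃ Fin k := Fin.revPerm.trans (Tuple.sort hM.eigenvalues)
  refine ⟨(hM.eigenvectorUnitary : Matrix (Fin k) (Fin k) ℂ).submatrix id e, ?_, ?_⟩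
  · rw [mem_unitaryGroup_iff, star_eq_conjTranspose, conjTranspose_submatrix, submatrix_mul_equiv,
      submatrix_id_id]
    exact Unitary.mul_star_self_of_mem hM.eigenvectorUnitary.2
  · have hdiag : diagonal (fun i => (eigVec M hM i : ℂ)) =
        (diagonal (RCLike.ofReal ∘ hM.eigenvalues) : Matrix (Fin k) (Fin k) ℂ).submatrix e e := by
      rw [submatrix_diagonal_equiv]
      rfl
    rw [hdiag, star_eq_conjTranspose, conjTranspose_submatrix, submatrix_mul_equiv,
      submatrix_mul_equiv, submatrix_id_id]
    exact hM.spectral_theorem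

lemma charpoly_eq_prod_eigVec (hM : M.IsHermitian) :
    M.charpoly = ∏ i, (X - C (eigVec M hM i : ℂ)) := by
  rw [hM.charpoly_eq, ← Equiv.prod_comp (Fin.revPerm.trans (Tuple.sort hM.eigenvalues))]
  rfl

lemma eq_of_antitone_of_prod_X_sub_C_eq {l l' : Fin k → ℝ} (hl : Antitone l) (hl' : Antitone l')
    (h : ∏ i, (X - C (l i : ℂ)) = ∏ i, (X - C (l' i : ℂ))) : l = l' := by
  have roots_eq (v : Fin k → ℝ) : (∏ i, (X - C (v i : ℂ))).roots.map Complex.re =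
      (List.ofFn v : Multiset ℝ) := by
    rw [roots_prod _ _ (Finset.prod_ne_zero_iff.mpr fun i _ => X_sub_C_ne_zero _)]
    simp [Fin.univ_val_map, List.map_ofFn, Function.comp_def]
  have hperm : (List.ofFn l).Perm (List.ofFn l') := by
    rw [← Multiset.coe_eq_coe, ← roots_eq, ← roots_eq, h]
  exact List.ofFn_injective (hperm.eq_of_sortedGE hl.sortedGE_ofFn hl'.sortedGE_ofFn)

end Eigenvalues

section SingularValues

variable {a b : ℕ} (Y : Matrix (Fin a) (Fin b) ℂ)

lemma sval_of_le {i : ℕ} (hi : a ≤ i) : sval Y i = 0 :=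
  dif_neg hi.not_gt

lemma sval_nonneg (i : ℕ) : 0 ≤ sval Y i := by
  unfold sval
  split_ifs
  exacts [Real.sqrt_nonneg _, le_rfl]

open scoped ComplexOrder in
lemma sq_sval (i : Fin a) :
    sval Y i ^ 2 = eigVec (Y * Yᴴ) (isHermitian_mul_conjTranspose_self Y) i := by
  rw [sval, dif_pos i.isLt]
  exact Real.sq_sqrt ((posSemidef_self_mul_conjTranspose Y).eigenvalues_nonneg _)

lemma sval_antitone : Antitone (sval Y) := by
  intro i j hij
  rcases lt_or_ge j a with hj | hj
  · rw [sval, sval, dif_pos hj, dif_pos (hij.trans_lt hj)]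
    exact Real.sqrt_le_sqrt (eigVec_antitone _ hij)
  · exact (sval_of_le Y hj).trans_le (sval_nonneg Y i)

lemma charpoly_mul_conjTranspose_eq_prod_sval :
    (Y * Yᴴ).charpoly = ∏ i : Fin a, (X - C ((sval Y i ^ 2 : ℝ) : ℂ)) := by
  simp only [sq_sval, charpoly_eq_prod_eigVec (isHermitian_mul_conjTranspose_self Y)]

variable {Y} in
lemma sval_eq_of_charpoly_eq {l : Fin a → ℝ} (hl : Antitone l) (hl₀ : ∀ i, 0 ≤ l i)
    (h : (Y * Yᴴ).charpoly = ∏ i, (X - C ((l i ^ 2 : ℝ) : ℂ))) (i : Fin a) : sval Y i = l i := by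
  rw [charpoly_mul_conjTranspose_eq_prod_sval] at h
  have hsq := eq_of_antitone_of_prod_X_sub_C_eq
    (fun _ j hij => pow_le_pow_left₀ (sval_nonneg Y j) (sval_antitone Y hij) 2)
    (fun _ j hij => pow_le_pow_left₀ (hl₀ j) (hl hij) 2) h
  exact (sq_eq_sq₀ (sval_nonneg Y i) (hl₀ i)).mp (congrFun hsq i)

lemma sval_conjTranspose (i : ℕ) : sval Yᴴ i = sval Y i := by
  wlog hab : a ≤ b generalizing a b
  · simpa only [conjTranspose_conjTranspose] using (this Yᴴ (le_of_not_ge hab)).symm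
  rcases lt_or_ge i b with hi | hi
  · refine sval_eq_of_charpoly_eq (l := fun j : Fin b => sval Y j)
      (fun _ _ hij => sval_antitone Y hij) (fun j => sval_nonneg Y j) ?_ ⟨i, hi⟩
    obtain ⟨k, rfl⟩ := Nat.exists_eq_add_of_le hab
    rw [conjTranspose_conjTranspose, charpoly_mul_comm_of_le _ _ (by simp),
      charpoly_mul_conjTranspose_eq_prod_sval, Fin.prod_univ_add, mul_comm]
    simp [sval_of_le]
  · rw [sval_of_le _ hi, sval_of_le _ (hab.trans hi)]

lemma sval_unitary_mul {U : Matrix (Fin a) (Fin a) ℂ} (hU : U ∈ unitaryGroup (Fin a) ℂ)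
    (i : Fin a) : sval (U * Y) i = sval Y i := by
  refine sval_eq_of_charpoly_eq (fun _ _ hij => sval_antitone Y hij) (fun j => sval_nonneg Y j) ?_ i
  rw [← charpoly_mul_conjTranspose_eq_prod_sval, conjTranspose_mul, Matrix.mul_assoc,
    charpoly_mul_comm, Matrix.mul_assoc, Matrix.mul_assoc, ← star_eq_conjTranspose U,
    mem_unitaryGroup_iff'.mp hU, Matrix.mul_one]

lemma sval_zero_eq_norm [NeZero a] : sval Y 0 = ‖Y‖ := by
  obtain ⟨U, hU, hY⟩ :=
    exists_unitary_eq_mul_diagonal_eigVec_mul (isHermitian_mul_conjTranspose_self Y)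
  rw [← sq_eq_sq₀ (sval_nonneg Y 0) (norm_nonneg Y), ← l2_opNorm_mul_conjTranspose_self, hY,
    l2_opNorm_unitary_mul_mul_unitary hU (Unitary.star_mem hU), l2_opNorm_diagonal]
  simp only [← sq_sval]
  refine le_antisymm ?_ ((pi_norm_le_iff_of_nonneg (sq_nonneg _)).mpr fun i => ?_)
  · rw [← Real.norm_of_nonneg (sq_nonneg (sval Y 0)), ← Complex.norm_real]
    exact norm_le_pi_norm (fun i : Fin a => ((sval Y i ^ 2 : ℝ) : ℂ)) 0
  · rw [Complex.norm_real, Real.norm_of_nonneg (sq_nonneg _)]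
    exact pow_le_pow_left₀ (sval_nonneg Y i) (sval_antitone Y (Nat.zero_le _)) 2

end SingularValues

section SingularValueDecomposition

variable {n : ℕ}

lemma exists_unitary_eq_diagonal_mul {Z : Matrix (Fin n) (Fin n) ℂ} {d : Fin n → ℝ}
    (hd : ∀ i, 0 ≤ d i) (hZ : Z * Zᴴ = diagonal fun i => ((d i ^ 2 : ℝ) : ℂ)) :
    ∃ V ∈ unitaryGroup (Fin n) ℂ, Z = diagonal (fun i => (d i : ℂ)) * V := by
  let z (i : Fin n) : EuclideanSpace ℂ (Fin n) := toLp 2 (Z i)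
  have inner_z (i j : Fin n) : inner ℂ (z i) (z j) = (Z * Zᴴ) j i := by
    simp [z, mul_apply, PiLp.inner_apply]
  have norm_z (i : Fin n) : ‖z i‖ = d i := by
    rw [← sq_eq_sq₀ (norm_nonneg _) (hd i), @norm_sq_eq_re_inner ℂ, inner_z, hZ, diagonal_apply_eq]
    exact Complex.ofReal_re _
  have orthogonal_z : Pairwise fun i j => inner ℂ (z i) (z j) = 0 := fun i j hij =>
    (inner_z i j).trans (hZ ▸ diagonal_apply_ne _ hij.symm)
  let v := InnerProductSpace.gramSchmidtOrthonormalBasis (𝕜 := ℂ) (by simp) z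
  have hv (i : Fin n) : z i = (d i : ℂ) • v i := by
    rcases eq_or_ne (z i) 0 with hi | hi
    · rw [← norm_z, hi, norm_zero, Complex.ofReal_zero, zero_smul]
    · rw [InnerProductSpace.gramSchmidtOrthonormalBasis_apply_of_orthogonal _ orthogonal_z hi,
        ← norm_z, smul_smul]
      simp [hi]
  refine ⟨of fun i => ofLp (v i), mem_unitaryGroup_iff.mpr ?_, ?_⟩
  · ext i j
    have hij := orthonormal_iff_ite.mp v.orthonormal j i
    simpa [mul_apply, PiLp.inner_apply, one_apply, eq_comm] using hij
  · ext i j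
    simpa [z] using congr(ofLp $(hv i) j)

lemma exists_unitary_eq_mul_diagonal_sval_mul (A : Matrix (Fin n) (Fin n) ℂ) :
    ∃ U ∈ unitaryGroup (Fin n) ℂ, ∃ V ∈ unitaryGroup (Fin n) ℂ,
      A = U * diagonal (fun i : Fin n => (sval A i : ℂ)) * V := by
  obtain ⟨U, hU, hA⟩ :=
    exists_unitary_eq_mul_diagonal_eigVec_mul (isHermitian_mul_conjTranspose_self A)
  simp only [← sq_sval] at hA
  have hZ : star U * A * (star U * A)ᴴ = diagonal fun i : Fin n => ((sval A i ^ 2 : ℝ) : ℂ) := by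
    rw [conjTranspose_mul, Matrix.mul_assoc, ← Matrix.mul_assoc A, hA, star_eq_conjTranspose,
      conjTranspose_conjTranspose, ← star_eq_conjTranspose, Matrix.mul_assoc, Matrix.mul_assoc,
      mem_unitaryGroup_iff'.mp hU, Matrix.mul_one, ← Matrix.mul_assoc, mem_unitaryGroup_iff'.mp hU,
      Matrix.one_mul]
  obtain ⟨V, hV, hVZ⟩ := exists_unitary_eq_diagonal_mul (fun i => sval_nonneg A i) hZ
  refine ⟨U, hU, V, hV, ?_⟩
  rw [Matrix.mul_assoc, ← hVZ, ← Matrix.mul_assoc, mem_unitaryGroup_iff.mp hU, Matrix.one_mul]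

lemma norm_one_sub_mul_conjTranspose_self (A : Matrix (Fin n) (Fin n) ℂ) :
    ‖1 - A * Aᴴ‖ = ‖1 - Aᴴ * A‖ := by
  obtain ⟨U, hU, V, hV, hA⟩ := exists_unitary_eq_mul_diagonal_sval_mul A
  set D : Matrix (Fin n) (Fin n) ℂ := diagonal fun i : Fin n => (sval A i : ℂ)
  have hD : star D = D := by
    rw [star_eq_conjTranspose, diagonal_conjTranspose]
    simp [D, Pi.star_def]
  have cancelU (B : Matrix (Fin n) (Fin n) ℂ) : star U * (U * B) = B := by
    rw [← Matrix.mul_assoc, mem_unitaryGroup_iff'.mp hU, Matrix.one_mul]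
  have cancelV (B : Matrix (Fin n) (Fin n) ℂ) : V * (star V * B) = B := by
    rw [← Matrix.mul_assoc, mem_unitaryGroup_iff.mp hV, Matrix.one_mul]
  have left : 1 - A * star A = U * (1 - D * D) * star U := by
    simp only [hA, star_mul, hD, Matrix.mul_assoc, Matrix.mul_sub, Matrix.sub_mul, Matrix.one_mul,
      mem_unitaryGroup_iff.mp hU, cancelV]
  have right : 1 - star A * A = star V * (1 - D * D) * V := by
    simp only [hA, star_mul, hD, Matrix.mul_assoc, Matrix.mul_sub, Matrix.sub_mul, Matrix.one_mul,
      mem_unitaryGroup_iff'.mp hV, cancelU]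
  rw [← star_eq_conjTranspose, left, right,
    l2_opNorm_unitary_mul_mul_unitary hU (Unitary.star_mem hU),
    l2_opNorm_unitary_mul_mul_unitary (Unitary.star_mem hV) hV]

lemma exists_unitary_norm_sub_smul_le (A : Matrix (Fin n) (Fin n) ℂ) {c r : ℝ}
    (hr : 0 ≤ r) (h : ∀ i : Fin n, |sval A i - c| ≤ r) :
    ∃ W ∈ unitaryGroup (Fin n) ℂ, ‖A - (c : ℂ) • W‖ ≤ r := by
  obtain ⟨U, hU, V, hV, hA⟩ := exists_unitary_eq_mul_diagonal_sval_mul A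
  refine ⟨U * V, mul_mem hU hV, ?_⟩
  have hdiff : A - (c : ℂ) • (U * V) =
      U * diagonal (fun i : Fin n => ((sval A i - c : ℝ) : ℂ)) * V := by
    have hdiag : diagonal (fun i : Fin n => ((sval A i - c : ℝ) : ℂ)) =
        diagonal (fun i : Fin n => (sval A i : ℂ)) - (c : ℂ) • 1 := by
      simp only [smul_one_eq_diagonal, diagonal_sub, Complex.ofReal_sub]
    rw [hdiag, Matrix.mul_sub, Matrix.sub_mul, ← hA, Matrix.mul_smul, Matrix.mul_one,
      Matrix.smul_mul]
  rw [hdiff, l2_opNorm_unitary_mul_mul_unitary hU hV, l2_opNorm_diagonal,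
    pi_norm_le_iff_of_nonneg hr]
  exact fun i => (Complex.norm_real _).trans_le (h i)

lemma norm_row_of_mem_unitaryGroup {U : Matrix (Fin n) (Fin n) ℂ}
    (hU : U ∈ unitaryGroup (Fin n) ℂ) (i : Fin n) : ‖toLp 2 (U i)‖ = 1 := by
  have hii : (U * star U) i i = 1 := by rw [mem_unitaryGroup_iff.mp hU, one_apply_eq]
  rw [← pow_eq_one_iff_of_nonneg (norm_nonneg _) two_ne_zero, EuclideanSpace.norm_sq_eq,
    ← Complex.ofReal_inj, Complex.ofReal_one, ← hii]
  simp [mul_apply, Complex.mul_conj']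

lemma norm_col_of_mem_unitaryGroup {U : Matrix (Fin n) (Fin n) ℂ}
    (hU : U ∈ unitaryGroup (Fin n) ℂ) (j : Fin n) : ‖toLp 2 (U.col j)‖ = 1 :=
  norm_row_of_mem_unitaryGroup (transpose_mem_unitaryGroup_iff.mpr hU) j

lemma exists_norm_sub_smul_vecMulVec_le [NeZero n] (A : Matrix (Fin n) (Fin n) ℂ) :
    ∃ u v : Fin n → ℂ, ‖toLp 2 u‖ = 1 ∧ ‖toLp 2 v‖ = 1 ∧
      ‖A - ((sval A 0 - sval A 1 : ℝ) : ℂ) • vecMulVec u v‖ ≤ sval A 1 := by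
  obtain ⟨U, hU, V, hV, hA⟩ := exists_unitary_eq_mul_diagonal_sval_mul A
  refine ⟨U.col 0, V 0, norm_col_of_mem_unitaryGroup hU 0, norm_row_of_mem_unitaryGroup hV 0, ?_⟩
  let d (i : Fin n) : ℝ := if i = 0 then sval A 1 else sval A i
  have hdiag : diagonal (fun i : Fin n => (sval A i : ℂ)) = diagonal (fun i => (d i : ℂ)) +
      ((sval A 0 - sval A 1 : ℝ) : ℂ) • vecMulVec (Pi.single 0 1) (Pi.single 0 1) := by
    rw [← single_eq_single_vecMulVec_single, ← diagonal_single, ← diagonal_smul, diagonal_add]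
    congr 1
    ext i
    rcases eq_or_ne i 0 with rfl | hi
    · simp [d]
    · simp [d, hi]
  have hsub : A - ((sval A 0 - sval A 1 : ℝ) : ℂ) • vecMulVec (U.col 0) (V 0) =
      U * diagonal (fun i => (d i : ℂ)) * V := by
    rw [sub_eq_iff_eq_add]
    conv_lhs => rw [hA, hdiag, Matrix.mul_add, Matrix.add_mul, Matrix.mul_smul, Matrix.smul_mul,
      mul_vecMulVec, vecMulVec_mul, mulVec_single_one, single_one_vecMul]
    rfl
  rw [hsub, l2_opNorm_unitary_mul_mul_unitary hU hV, l2_opNorm_diagonal,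
    pi_norm_le_iff_of_nonneg (sval_nonneg A 1)]
  intro i
  have hd : 0 ≤ d i ∧ d i ≤ sval A 1 := by
    rcases eq_or_ne i 0 with hi | hi
    · simp [d, hi, sval_nonneg]
    · simpa [d, hi, sval_nonneg] using
        sval_antitone A (Nat.one_le_iff_ne_zero.mpr (Fin.val_ne_zero_iff.mpr hi))
  rw [Complex.norm_real, Real.norm_of_nonneg hd.1]
  exact hd.2

end SingularValueDecomposition

section Blocks

variable {p q : ℕ}

lemma blockTL_mul (X Y : Matrix (Fin (p + q)) (Fin (p + q)) ℂ) :
    blockTL p q (X * Y) = blockTL p q X * blockTL p q Y + blockTR p q X * blockBL p q Y := by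
  ext i j
  simp [blockTL, blockTR, blockBL, mul_apply, Fin.sum_univ_add]

lemma norm_blockTR_le (X : Matrix (Fin (p + q)) (Fin (p + q)) ℂ) : ‖blockTR p q X‖ ≤ ‖X‖ :=
  l2_opNorm_submatrix_le X (Fin.castAdd_injective p q) (Fin.natAdd_injective q p)

lemma norm_blockBL_le (X : Matrix (Fin (p + q)) (Fin (p + q)) ℂ) : ‖blockBL p q X‖ ≤ ‖X‖ :=
  l2_opNorm_submatrix_le X (Fin.natAdd_injective q p) (Fin.castAdd_injective p q)

lemma norm_blockTR_eq_norm_blockBL_of_mem_unitaryGroup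
    {W : Matrix (Fin (p + q)) (Fin (p + q)) ℂ} (hW : W ∈ unitaryGroup (Fin (p + q)) ℂ) :
    ‖blockTR p q W‖ = ‖blockBL p q W‖ := by
  have blockTL_one : blockTL p q 1 = 1 := submatrix_one _ (Fin.castAdd_injective p q)
  have hTR : blockTR p q W * (blockTR p q W)ᴴ = 1 - blockTL p q W * (blockTL p q W)ᴴ := by
    rw [eq_sub_iff_add_eq', ← blockTL_one, ← mem_unitaryGroup_iff.mp hW, blockTL_mul]
    rfl
  have hBL : (blockBL p q W)ᴴ * blockBL p q W = 1 - (blockTL p q W)ᴴ * blockTL p q W := by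
    rw [eq_sub_iff_add_eq', ← blockTL_one, ← mem_unitaryGroup_iff'.mp hW, blockTL_mul]
    rfl
  rw [← sq_eq_sq₀ (norm_nonneg _) (norm_nonneg _), ← l2_opNorm_mul_conjTranspose_self, hTR,
    norm_one_sub_mul_conjTranspose_self, ← hBL, l2_opNorm_conjTranspose_mul_self, sq]

lemma abs_norm_blockTR_sub_norm_blockBL_le (A : Matrix (Fin (p + q)) (Fin (p + q)) ℂ) :
    |‖blockTR p q A‖ - ‖blockBL p q A‖| ≤ sval A 0 - sval A (p + q - 1) := by
  set c := (sval A 0 + sval A (p + q - 1)) / 2 with hc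
  set r := (sval A 0 - sval A (p + q - 1)) / 2 with hr
  have hr₀ : 0 ≤ r := by linarith [sval_antitone A (Nat.zero_le (p + q - 1))]
  have hcr (i : Fin (p + q)) : |sval A i - c| ≤ r := by
    have h₀ := sval_antitone A (Nat.zero_le i)
    have h₁ := sval_antitone A (Nat.le_sub_one_of_lt i.isLt)
    exact abs_le.mpr ⟨by linarith, by linarith⟩
  obtain ⟨W, hW, hAW⟩ := exists_unitary_norm_sub_smul_le A hr₀ hcr
  have hTR : |‖blockTR p q A‖ - ‖(c : ℂ) • blockTR p q W‖| ≤ r :=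
    (abs_norm_sub_norm_le _ _).trans ((norm_blockTR_le (A - (c : ℂ) • W)).trans hAW)
  have hBL : |‖blockBL p q A‖ - ‖(c : ℂ) • blockBL p q W‖| ≤ r :=
    (abs_norm_sub_norm_le _ _).trans ((norm_blockBL_le (A - (c : ℂ) • W)).trans hAW)
  rw [norm_smul, norm_blockTR_eq_norm_blockBL_of_mem_unitaryGroup hW, ← norm_smul] at hTR
  rw [abs_le] at hTR hBL ⊢
  constructor <;> linarith

lemma norm_blockTR_vecMulVec_add_norm_blockBL_vecMulVec_le {u v : Fin (p + q) → ℂ}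
    (hu : ‖toLp 2 u‖ ≤ 1) (hv : ‖toLp 2 v‖ ≤ 1) :
    ‖blockTR p q (vecMulVec u v)‖ + ‖blockBL p q (vecMulVec u v)‖ ≤ 1 := by
  have split (w : Fin (p + q) → ℂ) : ‖toLp 2 w‖ ^ 2 =
      ‖toLp 2 fun i => w (Fin.castAdd q i)‖ ^ 2 + ‖toLp 2 fun i => w (Fin.natAdd p i)‖ ^ 2 := by
    simp only [EuclideanSpace.norm_sq_eq, Fin.sum_univ_add]
  have hTR : ‖blockTR p q (vecMulVec u v)‖ ≤
      ‖toLp 2 fun i => u (Fin.castAdd q i)‖ * ‖toLp 2 fun i => v (Fin.natAdd p i)‖ :=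
    l2_opNorm_vecMulVec_le _ _
  have hBL : ‖blockBL p q (vecMulVec u v)‖ ≤
      ‖toLp 2 fun i => u (Fin.natAdd p i)‖ * ‖toLp 2 fun i => v (Fin.castAdd q i)‖ :=
    l2_opNorm_vecMulVec_le _ _
  have hu' := pow_le_one₀ (n := 2) (norm_nonneg _) hu
  have hv' := pow_le_one₀ (n := 2) (norm_nonneg _) hv
  rw [split] at hu' hv'
  linarith [two_mul_le_add_sq ‖toLp 2 fun i => u (Fin.castAdd q i)‖
      ‖toLp 2 fun i => v (Fin.natAdd p i)‖,
    two_mul_le_add_sq ‖toLp 2 fun i => u (Fin.natAdd p i)‖ ‖toLp 2 fun i => v (Fin.castAdd q i)‖]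

lemma norm_blockTR_add_norm_blockBL_le [NeZero (p + q)]
    (A : Matrix (Fin (p + q)) (Fin (p + q)) ℂ) :
    ‖blockTR p q A‖ + ‖blockBL p q A‖ ≤ sval A 0 + sval A 1 := by
  obtain ⟨u, v, hu, hv, hA⟩ := exists_norm_sub_smul_vecMulVec_le A
  set d := sval A 0 - sval A 1 with hd
  have hd₀ : 0 ≤ d := sub_nonneg.mpr (sval_antitone A zero_le_one)
  have hTR : ‖blockTR p q A‖ ≤ d * ‖blockTR p q (vecMulVec u v)‖ + sval A 1 := by
    have h := norm_le_norm_add_norm_sub' (blockTR p q A) ((d : ℂ) • blockTR p q (vecMulVec u v))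
    rw [norm_smul, Complex.norm_real, Real.norm_of_nonneg hd₀] at h
    exact h.trans (by gcongr; exact (norm_blockTR_le (A - (d : ℂ) • vecMulVec u v)).trans hA)
  have hBL : ‖blockBL p q A‖ ≤ d * ‖blockBL p q (vecMulVec u v)‖ + sval A 1 := by
    have h := norm_le_norm_add_norm_sub' (blockBL p q A) ((d : ℂ) • blockBL p q (vecMulVec u v))
    rw [norm_smul, Complex.norm_real, Real.norm_of_nonneg hd₀] at h
    exact h.trans (by gcongr; exact (norm_blockBL_le (A - (d : ℂ) • vecMulVec u v)).trans hA)
  have hrank_one : d * (‖blockTR p q (vecMulVec u v)‖ + ‖blockBL p q (vecMulVec u v)‖) ≤ d :=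
    mul_le_of_le_one_right hd₀
      (norm_blockTR_vecMulVec_add_norm_blockBL_vecMulVec_le hu.le hv.le)
  linarith [hd]

end Blocks

section ConeS

lemma mem_coneS_swap {p q : ℕ} {x : Fin (p + q) → ℝ} {s t : Fin q → ℝ}
    (h : (x, s, t) ∈ coneS p q) : (x, t, s) ∈ coneS p q := by
  obtain ⟨A, hx, hs, ht⟩ := h
  exact ⟨Aᴴ, fun i => (hx i).trans (sval_conjTranspose A i).symm,
    fun i => (ht i).trans (sval_conjTranspose (blockBL p q A) i).symm,
    fun i => (hs i).trans (sval_conjTranspose (blockTR p q A) i).symm⟩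

variable {g : Fin (2 + 1) → ℝ} {s t : ℝ}

lemma mem_coneS_two_one_of_entries {A : Matrix (Fin (2 + 1)) (Fin (2 + 1)) ℂ}
    (hA : ∀ i : Fin (2 + 1), sval A i = g i) (hs : 0 ≤ s) (ht : 0 ≤ t)
    (hTR : ‖A 0 2‖ ^ 2 + ‖A 1 2‖ ^ 2 = s ^ 2) (hBL : ‖A 2 0‖ ^ 2 + ‖A 2 1‖ ^ 2 = t ^ 2) :
    (g, fun _ : Fin 1 => s, fun _ : Fin 1 => t) ∈ coneS 2 1 := by
  have norm_TR : s = ‖blockTR 2 1 A‖ := by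
    rw [l2_opNorm_eq_norm_col (blockTR 2 1 A), ← sq_eq_sq₀ hs (norm_nonneg _),
      EuclideanSpace.norm_sq_eq, Fin.sum_univ_two, ← hTR]
    rfl
  have norm_BL : t = ‖blockBL 2 1 A‖ := by
    rw [l2_opNorm_eq_norm_row (blockBL 2 1 A), ← sq_eq_sq₀ ht (norm_nonneg _),
      EuclideanSpace.norm_sq_eq, Fin.sum_univ_two, ← hBL]
    rfl
  exact ⟨A, fun i => (hA i).symm,
    Fin.forall_fin_one.mpr (norm_TR.trans (sval_zero_eq_norm _).symm),
    Fin.forall_fin_one.mpr (norm_BL.trans (sval_zero_eq_norm _).symm)⟩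

/-- The direct sum of the scalar `m` and the `2 × 2` matrix with rows `(f, s)` and `(t, d)`.
For the splitting `3 = 2 + 1` its off-diagonal blocks have the single nonzero entries `s` and `t`,
and its singular values are `|m|` and those of the `2 × 2` summand. -/
def scalarSumTwo (m f s t d : ℝ) : Matrix (Fin 3) (Fin 3) ℂ :=
  !![(m : ℂ), 0, 0; 0, f, s; 0, t, d]

lemma sval_scalarSumTwo (hg : Antitone g) (hg₀ : ∀ i, 0 ≤ g i) (σ : Equiv.Perm (Fin 3))
    {f s t d : ℝ} (htrace : f ^ 2 + d ^ 2 + s ^ 2 + t ^ 2 = g (σ 0) ^ 2 + g (σ 1) ^ 2)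
    (hdet : (f * d - s * t) ^ 2 = (g (σ 0) * g (σ 1)) ^ 2) (i : Fin 3) :
    sval (scalarSumTwo (g (σ 2)) f s t d) i = g i := by
  have heval (m : ℝ) (x : ℂ) :
      (scalarSumTwo m f s t d * (scalarSumTwo m f s t d)ᴴ).charpoly.eval x = (x - m ^ 2) *
        ((x - (f ^ 2 + s ^ 2)) * (x - (t ^ 2 + d ^ 2)) - (f * t + s * d) ^ 2) := by
    rw [eval_charpoly, det_fin_three]
    simp [scalarSumTwo, vecMul, dotProduct, Fin.sum_univ_three]
    ring
  have htrace' : (f ^ 2 + d ^ 2 + s ^ 2 + t ^ 2 : ℂ) = g (σ 0) ^ 2 + g (σ 1) ^ 2 := by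
    exact_mod_cast htrace
  have hdet' : (f * d - s * t : ℂ) ^ 2 = (g (σ 0) * g (σ 1)) ^ 2 := by exact_mod_cast hdet
  refine sval_eq_of_charpoly_eq hg hg₀ (Polynomial.funext fun x => ?_) i
  rw [heval, ← Equiv.prod_comp σ, Fin.prod_univ_three]
  simp only [eval_mul, eval_sub, eval_X, eval_C, Complex.ofReal_pow]
  linear_combination (x - g (σ 2) ^ 2) * (hdet' - x * htrace')

lemma exists_diagonal_of_offDiagonal {p q : ℝ} (hs : 0 ≤ s) (ht : 0 ≤ t) (hadd : s + t ≤ p + q)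
    (hsub : |s - t| ≤ |p - q|) :
    ∃ f d : ℝ, f ^ 2 + d ^ 2 + s ^ 2 + t ^ 2 = p ^ 2 + q ^ 2 ∧ f * d - s * t = -(p * q) := by
  -- Solve `(f + d) ^ 2 = (p - q) ^ 2 - (s - t) ^ 2` and `(f - d) ^ 2 = (p + q) ^ 2 - (s + t) ^ 2`.
  have hu := Real.sq_sqrt (sub_nonneg.mpr (sq_le_sq.mpr hsub))
  have hv := Real.sq_sqrt (sub_nonneg.mpr (pow_le_pow_left₀ (add_nonneg hs ht) hadd 2))
  set u := √((p - q) ^ 2 - (s - t) ^ 2)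
  set v := √((p + q) ^ 2 - (s + t) ^ 2)
  refine ⟨(u + v) / 2, (u - v) / 2, ?_, ?_⟩
  · linear_combination (hu + hv) / 2
  · linear_combination (hu - hv) / 4

lemma mem_coneS_two_one_of_add_le_of_abs_sub_le (hg : Antitone g)
    (hg₀ : ∀ i, 0 ≤ g i) (hs : 0 ≤ s) (ht : 0 ≤ t)
    (σ : Equiv.Perm (Fin 3)) (hadd : s + t ≤ g (σ 0) + g (σ 1))
    (hsub : |s - t| ≤ |g (σ 0) - g (σ 1)|) :
    (g, fun _ : Fin 1 => s, fun _ : Fin 1 => t) ∈ coneS 2 1 := by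
  obtain ⟨f, d, htrace, hdet⟩ := exists_diagonal_of_offDiagonal hs ht hadd hsub
  refine mem_coneS_two_one_of_entries
    (sval_scalarSumTwo hg hg₀ σ htrace (by rw [hdet, neg_sq])) hs ht ?_ ?_ <;>
  simp [scalarSumTwo]

lemma rotation_mem_unitaryGroup {c k : ℝ} (hck : c ^ 2 + k ^ 2 = 1) :
    (!![(c : ℂ), 0, -k; 0, 1, 0; k, 0, c] : Matrix (Fin 3) (Fin 3) ℂ) ∈
      unitaryGroup (Fin 3) ℂ := by
  have hck' : (c * c + k * k : ℂ) = 1 := by exact_mod_cast (by linarith : c * c + k * k = 1)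
  rw [mem_unitaryGroup_iff]
  ext i j
  fin_cases i <;> fin_cases j <;>
    simp [mul_apply, star_apply, Fin.sum_univ_three, hck', add_comm (k * k : ℂ), mul_comm]

lemma mem_coneS_two_one_of_mul_le_mul (hg : Antitone g) (hg₀ : ∀ i, 0 ≤ g i) (hs : 0 < s)
    (hs₀ : s ≤ g 0) (hs₂ : g 2 ≤ s) (ht : 0 ≤ t) (ht₁ : t ≤ g 1) (hst : g 0 * g 2 ≤ s * t) :
    (g, fun _ : Fin 1 => s, fun _ : Fin 1 => t) ∈ coneS 2 1 := by
  -- Take `g 1 ⊕ B`, where `B` has singular values `g 0`, `g 2` and off-diagonal entries `s`, `u`.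
  -- Outside the last column its first and last rows have squared norms `g 1 ^ 2` and `u ^ 2`; a
  -- rotation mixing these rows brings the second norm to any value between the two.
  set u := g 0 * g 2 / s
  have hu : s * u = g 0 * g 2 := mul_div_cancel₀ _ hs.ne'
  have hu₀ : 0 ≤ u := div_nonneg (mul_nonneg (hg₀ 0) (hg₀ 2)) hs.le
  have hut : u ≤ t := le_of_mul_le_mul_left (hu.trans_le hst) hs
  have hsu : s + u ≤ g 0 + g 2 := by
    refine le_of_mul_le_mul_left ?_ hs
    linarith [mul_nonneg (sub_nonneg.mpr hs₀) (sub_nonneg.mpr hs₂)]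
  have hf₀ : 0 ≤ g 0 ^ 2 + g 2 ^ 2 - s ^ 2 - u ^ 2 := by
    linarith [pow_le_pow_left₀ (add_nonneg hs.le hu₀) hsu 2]
  have hf := Real.sq_sqrt hf₀
  set f := √(g 0 ^ 2 + g 2 ^ 2 - s ^ 2 - u ^ 2)
  obtain ⟨a, b, ha, hb, hab, hconv⟩ : t ^ 2 ∈ segment ℝ (u ^ 2) (g 1 ^ 2) := by
    rw [segment_eq_Icc (pow_le_pow_left₀ hu₀ (hut.trans ht₁) 2)]
    exact ⟨pow_le_pow_left₀ hu₀ hut 2, pow_le_pow_left₀ ht ht₁ 2⟩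
  have hW := rotation_mem_unitaryGroup (c := √a) (k := √b)
    (by rw [Real.sq_sqrt ha, Real.sq_sqrt hb, hab])
  have swap_zero : Equiv.swap (1 : Fin 3) 2 0 = 0 := by decide
  have hsval := sval_scalarSumTwo hg hg₀ (Equiv.swap 1 2) (f := f) (d := 0) (s := s) (t := u)
    (by rw [swap_zero, Equiv.swap_apply_left]; linarith)
    (by rw [swap_zero, Equiv.swap_apply_left, ← hu]; ring)
  refine mem_coneS_two_one_of_entries
    (fun i => (sval_unitary_mul _ hW i).trans (hsval i)) hs.le ht ?_ ?_
  · simp [scalarSumTwo]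
  · simpa [scalarSumTwo, mul_pow, Real.sq_sqrt, ha, hb] using (add_comm _ _).trans hconv

lemma mem_coneS_two_one_of_sub_le (hg : Antitone g) (hg₀ : ∀ i, 0 ≤ g i) (ht : 0 ≤ t)
    (hts : t ≤ s) (hs : s ≤ g 0) (hadd : s + t ≤ g 0 + g 1) (hsub : s - t ≤ g 0 - g 2) :
    (g, fun _ : Fin 1 => s, fun _ : Fin 1 => t) ∈ coneS 2 1 := by
  have h₀₁ : g 1 ≤ g 0 := hg (by decide)
  have h₀₂ : g 2 ≤ g 0 := hg (by decide)
  have hs₀ : 0 ≤ s := ht.trans hts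
  rcases le_or_gt (s - t) (g 0 - g 1) with hsub₁ | hsub₁
  · refine mem_coneS_two_one_of_add_le_of_abs_sub_le hg hg₀ hs₀ ht 1 hadd ?_
    rwa [abs_of_nonneg (sub_nonneg.mpr hts), Equiv.Perm.one_apply, Equiv.Perm.one_apply,
      abs_of_nonneg (sub_nonneg.mpr h₀₁)]
  rcases le_or_gt (s + t) (g 0 + g 2) with hadd₂ | hadd₂
  · refine mem_coneS_two_one_of_add_le_of_abs_sub_le hg hg₀ hs₀ ht (Equiv.swap 1 2) hadd₂ ?_
    rwa [abs_of_nonneg (sub_nonneg.mpr hts), Equiv.swap_apply_left,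
      Equiv.swap_apply_of_ne_of_ne (by decide) (by decide), abs_of_nonneg (sub_nonneg.mpr h₀₂)]
  have hs₂ : g 2 < s := by linarith
  refine mem_coneS_two_one_of_mul_le_mul hg hg₀ ((hg₀ 2).trans_lt hs₂) hs hs₂.le ht (by linarith) ?_
  calc g 0 * g 2 ≤ s * (g 0 + g 2 - s) := by
        linarith [mul_nonneg (sub_nonneg.mpr hs) (sub_nonneg.mpr hs₂.le)]
    _ ≤ s * t := mul_le_mul_of_nonneg_left (by linarith) hs₀

end ConeS

theorem stmt_10 (g : Fin (2 + 1) → ℝ) (s t : ℝ) :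
    (g, fun _ : Fin 1 => s, fun _ : Fin 1 => t) ∈ coneS 2 1 ↔
      (g 0 ≥ g 1 ∧ g 1 ≥ g 2 ∧ g 2 ≥ 0 ∧
       g 0 ≥ s ∧ s ≥ 0 ∧ g 0 ≥ t ∧ t ≥ 0 ∧
       g 0 + g 1 ≥ s + t ∧ g 0 - g 2 ≥ |s - t|) := by
  constructor
  · rintro ⟨A, hg, hs, ht⟩
    obtain rfl : g = fun i : Fin (2 + 1) => sval A i := funext hg
    obtain rfl : s = ‖blockTR 2 1 A‖ := (hs 0).trans (sval_zero_eq_norm _)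
    obtain rfl : t = ‖blockBL 2 1 A‖ := (ht 0).trans (sval_zero_eq_norm _)
    have hnorm := sval_zero_eq_norm A
    exact ⟨sval_antitone A (by decide), sval_antitone A (by decide), sval_nonneg A _,
      (norm_blockTR_le A).trans_eq hnorm.symm, norm_nonneg _,
      (norm_blockBL_le A).trans_eq hnorm.symm, norm_nonneg _,
      norm_blockTR_add_norm_blockBL_le A, abs_norm_blockTR_sub_norm_blockBL_le A⟩
  · rintro ⟨h₀₁, h₁₂, h₂, hs, hs₀, ht, ht₀, hadd, hsub⟩
    have hg : Antitone g := Fin.antitone_iff_succ_le.mpr (Fin.forall_fin_two.mpr ⟨h₀₁, h₁₂⟩)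
    have hg₀ (i : Fin 3) : 0 ≤ g i := h₂.trans (hg (Fin.le_last i))
    obtain ⟨hsub_ts, hsub_st⟩ := abs_le.mp hsub
    rcases le_total t s with hts | hst
    · exact mem_coneS_two_one_of_sub_le hg hg₀ ht₀ hts hs hadd hsub_st
    · exact mem_coneS_swap
        (mem_coneS_two_one_of_sub_le hg hg₀ hs₀ hst ht (by linarith) (by linarith))
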